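/- Let q and q′ be odd prime powers with q ≡ 1 (mod 4) and q′ ≡ 1 (mod 4), let k be odd with 3 < k, k dividing both q−1 and q′−1, k < q−1, k < q′−1, and suppose e = (q−1)/k and e′ = (q′−1)/k are both even. Let β ∈ F_q and β′ ∈ F_{q′} be primitive k-th roots of unity. If χ_q(1−β^i) = χ_{q′}(1−β′^i) for every i with 1 ≤ i ≤ (k−1)/2, then (q,k) gives a 3-design if and only if (q′,k) gives a 3-design. (Here χ_q and χ_{q′} denote the quadratic residue characters of F_q and F_{q′}.) -/

import Mathlib

/-!
Setting: `F` is a finite field of order `q`. The projective line `PG(1,q)` is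
modelled as `Projectivization F (Fin 2 → F)`. Since scalar matrices act trivially
on the projective line, the images of a set under all elements of `SL(2,F)` form
exactly its `PSL(2,F)`-orbit; `mapSL g` is the map of the projective line induced
by `g : SL(2,F)`. For `k ∣ q - 1`, the unique subgroup of order `k` of `Fˣ` is the
set of `k`-th roots of unity `{x : F | x ^ k = 1}`, embedded into the projective
line via `x ↦ [x : 1]`. `(q, k)` gives a 3-design iff there is `lam > 0` such that
every 3-subset of the projective line lies in exactly `lam` blocks of the orbit.
-/

noncomputable section

open Matrix

/-- The point at infinity `[1 : 0]` of the projective line over `F`. -/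
def inftyPt (F : Type) [Field F] : Projectivization F (Fin 2 → F) :=
  Projectivization.mk F ![1, 0] (by
    intro h
    simpa using congrFun h 0)

/-- The embedding of `F` into the projective line, `x ↦ [x : 1]`. -/
def embedPt (F : Type) [Field F] (x : F) : Projectivization F (Fin 2 → F) :=
  Projectivization.mk F ![x, 1] (by
    intro h
    simpa using congrFun h 1)

/-- The action of `g : SL(2,F)` on the projective line (as linear fractional
transformation). -/
def mapSL {F : Type} [Field F] (g : Matrix.SpecialLinearGroup (Fin 2) F) :
    Projectivization F (Fin 2 → F) → Projectivization F (Fin 2 → F) :=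
  Projectivization.map (Matrix.SpecialLinearGroup.toLin' g : (Fin 2 → F) →ₗ[F] (Fin 2 → F))
    (Matrix.SpecialLinearGroup.toLin' g).injective

/-- The starter block: the unique subgroup of order `k` of `Fˣ` (the `k`-th roots
of unity, for `k ∣ q - 1`), regarded as a subset of the projective line. -/
def starterB (F : Type) [Field F] (k : ℕ) : Set (Projectivization F (Fin 2 → F)) :=
  embedPt F '' {x : F | x ^ k = 1}

/-- The `PSL(2,F)`-orbit `GB` of the starter block. -/
def designBlocks (F : Type) [Field F] (k : ℕ) :
    Set (Set (Projectivization F (Fin 2 → F))) :=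
  {S | ∃ g : Matrix.SpecialLinearGroup (Fin 2) F, S = mapSL g '' starterB F k}

/-- `GB` is the block set of a `3-(q+1, k, lam)` design: `lam` is positive and every
3-subset of the projective line is contained in exactly `lam` blocks. -/
def isThreeDesign (F : Type) [Field F] (k lam : ℕ) : Prop :=
  0 < lam ∧
    ∀ T : Finset (Projectivization F (Fin 2 → F)), T.card = 3 →
      {S ∈ designBlocks F k | (T : Set (Projectivization F (Fin 2 → F))) ⊆ S}.ncard = lam

/-- `(q, k)` gives a 3-design. -/
def gives3Design (F : Type) [Field F] (k : ℕ) : Prop :=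
  ∃ lam : ℕ, isThreeDesign F k lam

/-!
The sign `χ([p, q] [q, r] [r, p])` of a triple of points of the projective line is multiplied by
`χ(det g)` under `g ∈ GL₂`. Hence `SL₂` has exactly two orbits on ordered triples of distinct
points, the level sets of the sign, and they are equinumerous, so the orbit of a block `B` is a
3-design iff triples of sign `1` and of sign `-1` lie in equally many blocks, `λ₊ = λ₋`. Weighting
the incidences between triples and blocks by the sign and counting them in two ways shows that
`|GB| ∑_{t ∈ B³} sign t = (λ₊ - λ₋) N`, where `N` is the number of triples of sign `1`. So the
design property amounts to the vanishing of the sign sum over `B³`. If `B` consists of the powers of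
a root of unity `β` of odd order `k` and `q ≡ 1 (mod 4)`, then `χ(-1) = χ(β) = 1`, so that
`χ(βᵃ - βᵇ) = χ(1 - βᵈ)`, where `d ≤ (k - 1) / 2` is the distance of `a` and `b` modulo `k`.
-/

open scoped Pointwise LinearAlgebra.Projectivization MatrixGroups

section OrbitCounting

open MulAction

variable {G X Y R : Type*} [Group G] [MulAction G X]

/-- The sum of `ε` over all ordered triples of points of `S`, with value `0` if infinitely many of
its terms are nonzero. -/
def tripleSum [AddCommMonoid R] (ε : X × X × X → R) (S : Set X) : R :=
  ∑ᶠ t ∈ S ×ˢ S ×ˢ S, ε t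

lemma tripleSum_congr [AddCommMonoid R] {ε ε' : X × X × X → R} {S : Set X}
    (h : ∀ x ∈ S, ∀ y ∈ S, ∀ z ∈ S, ε (x, y, z) = ε' (x, y, z)) :
    tripleSum ε S = tripleSum ε' S :=
  finsum_mem_congr rfl fun t ht ↦ h t.1 ht.1 t.2.1 ht.2.1 t.2.2 ht.2.2

lemma tripleSum_image [AddCommMonoid R] (ε : X × X × X → R) {f : Y → X} {S : Set Y}
    (hf : Set.InjOn f S) :
    tripleSum ε (f '' S) = tripleSum (fun t ↦ ε (f t.1, f t.2.1, f t.2.2)) S := by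
  have hinj : Set.InjOn (Prod.map f (Prod.map f f)) (S ×ˢ S ×ˢ S) :=
    hf.prodMap (hf.prodMap hf)
  rw [tripleSum, ← Set.prodMap_image_prod, ← Set.prodMap_image_prod, finsum_mem_image hinj]
  rfl

lemma tripleSum_smul [AddCommMonoid R] {ε : X × X × X → R}
    (hε : ∀ (g : G) t, ε (g • t) = ε t) (g : G) (S : Set X) :
    tripleSum ε (g • S) = tripleSum ε S := by
  rw [← Set.image_smul, tripleSum_image ε (MulAction.injective g).injOn]
  exact congrArg (tripleSum · S) (funext fun t ↦ hε g t)

/-- The number of blocks in the `G`-orbit of `B` that contain all three entries of `t`. -/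
def orbitDegree (G : Type*) [Group G] [MulAction G X] (B : Set X) (t : X × X × X) : ℕ :=
  {S ∈ orbit G B | t ∈ S ×ˢ S ×ˢ S}.ncard

lemma orbitDegree_smul (B : Set X) (g : G) (t : X × X × X) :
    orbitDegree G B (g • t) = orbitDegree G B t := by
  have himage : {S ∈ orbit G B | g • t ∈ S ×ˢ S ×ˢ S} =
      (g • ·) '' {S ∈ orbit G B | t ∈ S ×ˢ S ×ˢ S} := by
    ext S
    simp only [Set.image_smul, Set.mem_smul_set_iff_inv_smul_mem, Set.mem_ofPred_eq, Set.mem_prod,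
      Prod.smul_fst, Prod.smul_snd, inv_inv, ← orbit_eq_iff, orbit_smul]
  rw [orbitDegree, himage, Set.ncard_image_of_injective _ (MulAction.injective g), orbitDegree]

lemma orbitDegree_pos [Finite X] {B : Set X} {t : X × X × X} (ht : t ∈ B ×ˢ B ×ˢ B) :
    0 < orbitDegree G B t :=
  (Set.ncard_pos (Set.toFinite _)).mpr ⟨B, mem_orbit_self B, ht⟩

lemma sum_orbitDegree_mul [Fintype X] [Semiring R] {ε : X × X × X → R}
    (hε : ∀ (g : G) t, ε (g • t) = ε t) (B : Set X) :
    ∑ t, (orbitDegree G B t : R) * ε t = (orbit G B).ncard * tripleSum ε B := by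
  classical
  have htriple (S : Set X) : tripleSum ε S = ∑ t with t ∈ S ×ˢ S ×ˢ S, ε t := by
    rw [tripleSum, finsum_mem_eq_finite_toFinset_sum _ (Set.toFinite _)]
    congr 1; ext; simp
  calc ∑ t, (orbitDegree G B t : R) * ε t
      = ∑ t, ∑ S ∈ (orbit G B).toFinset with t ∈ S ×ˢ S ×ˢ S, ε t := by
        refine Finset.sum_congr rfl fun t _ ↦ ?_
        rw [Finset.sum_const, nsmul_eq_mul, orbitDegree, ← Set.ncard_coe_finset]
        congr 3; ext; simp
    _ = ∑ S ∈ (orbit G B).toFinset, tripleSum ε S := by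
        simp only [htriple]
        exact Finset.sum_comm' (by simp [and_comm])
    _ = ∑ _ ∈ (orbit G B).toFinset, tripleSum ε B := by
        refine Finset.sum_congr rfl fun S hS ↦ ?_
        obtain ⟨g, rfl⟩ := Set.mem_toFinset.mp hS
        exact tripleSum_smul hε g B
    _ = (orbit G B).ncard * tripleSum ε B := by
        rw [Finset.sum_const, nsmul_eq_mul, Set.ncard_eq_toFinset_card']

lemma sum_mul_eq_sub_mul_card [Fintype X] {ε f : X → ℤ} {a b : ℤ}
    (hε : ∀ x, ε x = 0 ∨ ε x = 1 ∨ ε x = -1) (hsum : ∑ x, ε x = 0)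
    (ha : ∀ x, ε x = 1 → f x = a) (hb : ∀ x, ε x = -1 → f x = b) :
    ∑ x, f x * ε x = (a - b) * Finset.card {x | ε x = 1} := by
  have hterm (x : X) : f x * ε x = (a - b) * (if ε x = 1 then 1 else 0) + b * ε x := by
    rcases hε x with h | h | h
    · simp [h]
    · simp [h, ha x h]
    · simp [h, hb x h]
  simp only [hterm, Finset.sum_add_distrib, ← Finset.mul_sum, hsum, Finset.sum_boole, mul_zero,
    add_zero]

end OrbitCounting

section Bracket

variable {R K : Type*} [CommRing R] [Field K]

/-- The bracket (the `2 × 2` determinant) of two vectors, whose vanishing expresses that they span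
the same point of the projective line. -/
def bracket (p q : Fin 2 → R) : R :=
  p 0 * q 1 - p 1 * q 0

lemma bracket_smul_smul (a b : R) (p q : Fin 2 → R) :
    bracket (a • p) (b • q) = a * b * bracket p q := by
  simp only [bracket, Pi.smul_apply, smul_eq_mul]
  ring

lemma bracket_mulVec_mulVec (M : Matrix (Fin 2) (Fin 2) R) (p q : Fin 2 → R) :
    bracket (M *ᵥ p) (M *ᵥ q) = M.det * bracket p q := by
  simp only [bracket, Matrix.mulVec_fin_two, Matrix.det_fin_two, Matrix.cons_val_zero,
    Matrix.cons_val_one]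
  ring

lemma bracket_smul_add_bracket_smul (p q r : Fin 2 → R) :
    bracket q r • p + bracket r p • q = -bracket p q • r := by
  ext i
  fin_cases i <;> simp [bracket] <;> ring

lemma bracket_ne_zero_iff {p q : Fin 2 → K} (hp : p ≠ 0) (hq : q ≠ 0) :
    bracket p q ≠ 0 ↔ Projectivization.mk K p hp ≠ Projectivization.mk K q hq := by
  have hdet : bracket p q = (Matrix.of ![p, q]).det := (Matrix.det_fin_two (Matrix.of ![p, q])).symm
  rw [← Projectivization.independent_pair_iff_ne,
    Projectivization.independent_mk_iff_LinearIndependent, hdet, ← isUnit_iff_ne_zero,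
    ← Matrix.isUnit_iff_isUnit_det, ← Matrix.linearIndependent_rows_iff_isUnit]
  rfl

end Bracket

section TripleSign

/-- Ordered triples of (not necessarily distinct) points of the projective line over `F`. -/
abbrev PointTriple (F : Type*) [Field F] : Type _ :=
  ℙ F (Fin 2 → F) × ℙ F (Fin 2 → F) × ℙ F (Fin 2 → F)

variable {F : Type*} [Field F] [Fintype F] [DecidableEq F]

/-- The quadratic character of `[p, q] [q, r] [r, p]` for a triple of points of the projective line
with representatives `p`, `q`, `r`. Every representative enters this product twice, so that its
choice is immaterial. -/
def tripleSign (t : PointTriple F) : ℤ :=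
  quadraticChar F (bracket t.1.rep t.2.1.rep * bracket t.2.1.rep t.2.2.rep *
    bracket t.2.2.rep t.1.rep)

lemma tripleSign_mk {p q r : Fin 2 → F} (hp : p ≠ 0) (hq : q ≠ 0) (hr : r ≠ 0) :
    tripleSign (.mk F p hp, .mk F q hq, .mk F r hr) =
      quadraticChar F (bracket p q * bracket q r * bracket r p) := by
  obtain ⟨a, ha⟩ := Projectivization.exists_smul_eq_mk_rep F p hp
  obtain ⟨b, hb⟩ := Projectivization.exists_smul_eq_mk_rep F q hq
  obtain ⟨c, hc⟩ := Projectivization.exists_smul_eq_mk_rep F r hr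
  have hrescale : bracket (a • p) (b • q) * bracket (b • q) (c • r) * bracket (c • r) (a • p) =
      (a * b * c : F) ^ 2 * (bracket p q * bracket q r * bracket r p) := by
    simp only [Units.smul_def, bracket_smul_smul]
    ring
  rw [tripleSign, ← ha, ← hb, ← hc, hrescale, map_mul, quadraticChar_sq_one' (by simp), one_mul]

lemma tripleSign_ne_zero_iff {P Q R : ℙ F (Fin 2 → F)} :
    tripleSign (P, Q, R) ≠ 0 ↔ P ≠ Q ∧ Q ≠ R ∧ R ≠ P := by
  induction P using Projectivization.ind with | h p hp
  induction Q using Projectivization.ind with | h q hq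
  induction R using Projectivization.ind with | h r hr
  simp only [tripleSign_mk, ne_eq, quadraticChar_eq_zero_iff, mul_eq_zero, not_or, and_assoc,
    ← bracket_ne_zero_iff]

lemma tripleSign_eq_zero_or_one_or_neg_one (t : PointTriple F) :
    tripleSign t = 0 ∨ tripleSign t = 1 ∨ tripleSign t = -1 :=
  (quadraticChar_isQuadratic F) _

lemma tripleSign_GL_smul (g : GL (Fin 2) F) (t : PointTriple F) :
    tripleSign (g • t) = quadraticChar F g.det * tripleSign t := by
  obtain ⟨P, Q, R⟩ := t
  induction P using Projectivization.ind with | h p hp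
  induction Q using Projectivization.ind with | h q hq
  induction R using Projectivization.ind with | h r hr
  have hsmul (v : Fin 2 → F) : g • v = g.1 *ᵥ v := rfl
  have hdet : bracket (g • p) (g • q) * bracket (g • q) (g • r) * bracket (g • r) (g • p) =
      (g.det : F) ^ 2 * (g.det * (bracket p q * bracket q r * bracket r p)) := by
    simp only [hsmul, bracket_mulVec_mulVec, Matrix.GeneralLinearGroup.val_det_apply]
    ring
  simp only [Prod.smul_mk, Projectivization.smul_mk, tripleSign_mk, hdet]
  rw [map_mul, quadraticChar_sq_one' g.det.ne_zero, one_mul, map_mul]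

lemma tripleSign_SL_smul (g : SL(2, F)) (t : PointTriple F) :
    tripleSign (g • t) = tripleSign t := by
  calc tripleSign (g • t) = tripleSign ((g : GL (Fin 2) F) • t) := rfl
    _ = tripleSign t := by simp [tripleSign_GL_smul]

lemma exists_GL_quadraticChar_det_eq_neg_one (hF : ringChar F ≠ 2) :
    ∃ g : GL (Fin 2) F, quadraticChar F g.det = -1 := by
  obtain ⟨n, hn⟩ := quadraticChar_exists_neg_one' hF
  refine ⟨.mkOfDetNeZero !![(n : F), 0; 0, 1] (by simp), ?_⟩
  rw [← hn, Matrix.GeneralLinearGroup.val_det_apply]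
  simp [Matrix.GeneralLinearGroup.mkOfDetNeZero]

lemma sum_tripleSign [Fintype (ℙ F (Fin 2 → F))] (hF : ringChar F ≠ 2) :
    ∑ t : PointTriple F, tripleSign t = 0 := by
  obtain ⟨g, hg⟩ := exists_GL_quadraticChar_det_eq_neg_one hF
  refine self_eq_neg.mp ?_
  calc ∑ t, tripleSign t = ∑ t, tripleSign (g • t) := ((MulAction.bijective g).sum_comp _).symm
    _ = -∑ t, tripleSign t := by
        simp only [tripleSign_GL_smul, hg, neg_one_mul, Finset.sum_neg_distrib]

end TripleSign

section Transitivity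

lemma exists_SL_smul_eq_GL_smul {n K : Type*} [Fintype n] [DecidableEq n] [Field K] {g : GL n K}
    {s : Kˣ} (hs : g.det = s ^ Fintype.card n) :
    ∃ h : Matrix.SpecialLinearGroup n K, ∀ P : ℙ K (n → K), h • P = g • P := by
  have hdet : (((s⁻¹ : Kˣ) : K) • g.1).det = 1 := by
    rw [Matrix.det_smul, ← Matrix.GeneralLinearGroup.val_det_apply, hs]
    simp
  let h : Matrix.SpecialLinearGroup n K := ⟨((s⁻¹ : Kˣ) : K) • g.1, hdet⟩
  refine ⟨h, fun P ↦ ?_⟩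
  induction P using Projectivization.ind with | h p hp
  rw [Projectivization.smul_mk, Projectivization.smul_mk, Projectivization.mk_eq_mk_iff']
  exact ⟨(s⁻¹ : Kˣ), (Matrix.smul_mulVec _ _ _).symm⟩

variable {F : Type} [Field F]

/-- The triple `(∞, 0, 1)` of points of the projective line. -/
def standardTriple (F : Type) [Field F] : PointTriple F :=
  (inftyPt F, embedPt F 0, embedPt F 1)

lemma exists_GL_smul_standardTriple {P Q R : ℙ F (Fin 2 → F)} (hPQ : P ≠ Q) (hQR : Q ≠ R)
    (hRP : R ≠ P) : ∃ g : GL (Fin 2) F, g • standardTriple F = (P, Q, R) := by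
  induction P using Projectivization.ind with | h p hp
  induction Q using Projectivization.ind with | h q hq
  induction R using Projectivization.ind with | h r hr
  rw [← bracket_ne_zero_iff] at hPQ hQR hRP
  -- The columns add up to `-[p, q] r` by the Plücker relation, so `1` is sent to `R`.
  let M : Matrix (Fin 2) (Fin 2) F := (Matrix.of ![bracket q r • p, bracket r p • q])ᵀ
  have hM : M.det ≠ 0 := by
    rw [Matrix.det_transpose, Matrix.det_fin_two]
    change bracket (bracket q r • p) (bracket r p • q) ≠ 0
    rw [bracket_smul_smul]
    exact mul_ne_zero (mul_ne_zero hQR hRP) hPQ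
  have hMv (v : Fin 2 → F) : M *ᵥ v = v 0 • bracket q r • p + v 1 • bracket r p • q := by
    ext i; fin_cases i <;> simp [M] <;> ring
  refine ⟨.mkOfDetNeZero M hM, ?_⟩
  simp only [standardTriple, inftyPt, embedPt, Prod.smul_mk, Projectivization.smul_mk,
    Prod.mk.injEq, Projectivization.mk_eq_mk_iff']
  refine ⟨⟨bracket q r, ?_⟩, ⟨bracket r p, ?_⟩, ⟨-bracket p q, ?_⟩⟩
  · exact (by simp [hMv] : bracket q r • p = M *ᵥ ![1, 0])
  · exact (by simp [hMv] : bracket r p • q = M *ᵥ ![0, 1])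
  · exact (by simp [hMv, bracket_smul_add_bracket_smul] : -bracket p q • r = M *ᵥ ![1, 1])

variable [Fintype F] [DecidableEq F]

lemma tripleSign_standardTriple : tripleSign (standardTriple F) = 1 := by
  simp only [standardTriple, inftyPt, embedPt, tripleSign_mk]
  simp [bracket]

lemma exists_GL_smul_eq_of_tripleSign_ne_zero {t t' : PointTriple F} (ht : tripleSign t ≠ 0)
    (ht' : tripleSign t' ≠ 0) : ∃ g : GL (Fin 2) F, g • t = t' := by
  obtain ⟨P, Q, R⟩ := t
  obtain ⟨P', Q', R'⟩ := t'
  obtain ⟨hPQ, hQR, hRP⟩ := tripleSign_ne_zero_iff.mp ht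
  obtain ⟨hPQ', hQR', hRP'⟩ := tripleSign_ne_zero_iff.mp ht'
  obtain ⟨a, ha⟩ := exists_GL_smul_standardTriple hPQ hQR hRP
  obtain ⟨b, hb⟩ := exists_GL_smul_standardTriple hPQ' hQR' hRP'
  exact ⟨b * a⁻¹, by rw [mul_smul, ← ha, inv_smul_smul, hb]⟩

lemma exists_SL_smul_eq_of_tripleSign_eq {t t' : PointTriple F} (ht : tripleSign t ≠ 0)
    (htt' : tripleSign t = tripleSign t') : ∃ g : SL(2, F), g • t = t' := by
  obtain ⟨g, rfl⟩ := exists_GL_smul_eq_of_tripleSign_ne_zero ht (htt' ▸ ht)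
  have hdet : quadraticChar F g.det = 1 :=
    mul_right_cancel₀ ht (by rw [← tripleSign_GL_smul, one_mul, htt'])
  obtain ⟨s, hs⟩ := (quadraticChar_one_iff_isSquare g.det.ne_zero).mp hdet
  have hs0 : s ≠ 0 := by
    rintro rfl
    exact g.det.ne_zero (hs.trans (zero_mul 0))
  obtain ⟨h, hh⟩ := exists_SL_smul_eq_GL_smul (g := g) (s := .mk0 s hs0)
    (Units.ext (by simpa [sq] using hs))
  exact ⟨h, by simp only [Prod.ext_iff, Prod.smul_fst, Prod.smul_snd, hh, and_self]⟩

end Transitivity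

section DesignCriterion

variable {F : Type} [Field F]

lemma designBlocks_eq_orbit (k : ℕ) :
    designBlocks F k = MulAction.orbit SL(2, F) (starterB F k) := by
  ext S
  exact exists_congr fun g ↦ eq_comm

lemma ncard_blocks_eq_orbitDegree [DecidableEq (ℙ F (Fin 2 → F))] (k : ℕ)
    (P Q R : ℙ F (Fin 2 → F)) :
    {S ∈ designBlocks F k | (({P, Q, R} : Finset (ℙ F (Fin 2 → F))) : Set _) ⊆ S}.ncard =
      orbitDegree SL(2, F) (starterB F k) (P, Q, R) := by
  simp only [orbitDegree, designBlocks_eq_orbit, Finset.coe_insert, Finset.coe_singleton,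
    Set.insert_subset_iff, Set.singleton_subset_iff, Set.mem_prod]

variable [Fintype F] [DecidableEq F]

lemma isThreeDesign_iff (k lam : ℕ) :
    isThreeDesign F k lam ↔ 0 < lam ∧ ∀ t : PointTriple F, tripleSign t ≠ 0 →
      orbitDegree SL(2, F) (starterB F k) t = lam := by
  classical
  refine and_congr_right fun _ ↦ ⟨fun h t ht ↦ ?_, fun h T hT ↦ ?_⟩
  · obtain ⟨hPQ, hQR, hRP⟩ := tripleSign_ne_zero_iff.mp ht
    rw [← h _ (Finset.card_eq_three.mpr ⟨_, _, _, hPQ, hRP.symm, hQR, rfl⟩),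
      ncard_blocks_eq_orbitDegree]
  · obtain ⟨P, Q, R, hPQ, hPR, hQR, rfl⟩ := Finset.card_eq_three.mp hT
    rw [ncard_blocks_eq_orbitDegree]
    exact h _ (tripleSign_ne_zero_iff.mpr ⟨hPQ, hQR, hPR.symm⟩)

lemma orbitDegree_eq_of_tripleSign_eq (B : Set (ℙ F (Fin 2 → F))) {t t' : PointTriple F}
    (ht : tripleSign t ≠ 0) (htt' : tripleSign t = tripleSign t') :
    orbitDegree SL(2, F) B t = orbitDegree SL(2, F) B t' := by
  obtain ⟨g, rfl⟩ := exists_SL_smul_eq_of_tripleSign_eq ht htt'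
  exact (orbitDegree_smul B g t).symm

lemma ncard_orbit_mul_tripleSum [Fintype (ℙ F (Fin 2 → F))] (hF : ringChar F ≠ 2)
    (B : Set (ℙ F (Fin 2 → F))) {tpos tneg : PointTriple F} (hpos : tripleSign tpos = 1)
    (hneg : tripleSign tneg = -1) :
    (MulAction.orbit SL(2, F) B).ncard * tripleSum tripleSign B =
      ((orbitDegree SL(2, F) B tpos : ℤ) - orbitDegree SL(2, F) B tneg) *
        Finset.card {t : PointTriple F | tripleSign t = 1} := by
  rw [← sum_orbitDegree_mul tripleSign_SL_smul]
  refine sum_mul_eq_sub_mul_card tripleSign_eq_zero_or_one_or_neg_one (sum_tripleSign hF)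
    (fun t ht ↦ ?_) (fun t ht ↦ ?_)
  · rw [orbitDegree_eq_of_tripleSign_eq B (by simp [ht]) (ht.trans hpos.symm)]
  · rw [orbitDegree_eq_of_tripleSign_eq B (by simp [ht]) (ht.trans hneg.symm)]

lemma tripleSum_eq_zero_iff_orbitDegree_eq (hF : ringChar F ≠ 2) (B : Set (ℙ F (Fin 2 → F)))
    {tpos tneg : PointTriple F} (hpos : tripleSign tpos = 1) (hneg : tripleSign tneg = -1) :
    tripleSum tripleSign B = 0 ↔
      orbitDegree SL(2, F) B tpos = orbitDegree SL(2, F) B tneg := by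
  have := Fintype.ofFinite (ℙ F (Fin 2 → F))
  have horbit : ((MulAction.orbit SL(2, F) B).ncard : ℤ) ≠ 0 :=
    mod_cast ((Set.ncard_pos (Set.toFinite _)).mpr (MulAction.nonempty_orbit B)).ne'
  have hcard : (Finset.card {t : PointTriple F | tripleSign t = 1} : ℤ) ≠ 0 :=
    mod_cast Finset.card_ne_zero_of_mem (Finset.mem_filter_univ _ |>.mpr hpos)
  rw [← mul_eq_zero_iff_left horbit, ncard_orbit_mul_tripleSum hF B hpos hneg,
    mul_eq_zero_iff_right hcard, sub_eq_zero, Nat.cast_inj]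

theorem gives3Design_iff_tripleSum_eq_zero (hF : ringChar F ≠ 2) {k : ℕ} {t₀ : PointTriple F}
    (ht₀ : tripleSign t₀ ≠ 0) (ht₀B : t₀ ∈ starterB F k ×ˢ starterB F k ×ˢ starterB F k) :
    gives3Design F k ↔ tripleSum tripleSign (starterB F k) = 0 := by
  obtain ⟨g, hg⟩ := exists_GL_quadraticChar_det_eq_neg_one hF
  have hpos := tripleSign_standardTriple (F := F)
  have hneg : tripleSign (g • standardTriple F) = -1 := by
    rw [tripleSign_GL_smul, hg, hpos, mul_one]
  rw [tripleSum_eq_zero_iff_orbitDegree_eq hF _ hpos hneg]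
  simp only [gives3Design, isThreeDesign_iff]
  refine ⟨fun ⟨lam, _, hlam⟩ ↦ ?_,
    fun heq ↦ ⟨_, orbitDegree_pos (G := SL(2, F)) ht₀B, fun t ht ↦ ?_⟩⟩
  · rw [hlam _ (by simp [hpos]), hlam _ (by simp [hneg])]
  · have hstd {t : PointTriple F} (ht : tripleSign t ≠ 0) :
        orbitDegree SL(2, F) (starterB F k) t =
          orbitDegree SL(2, F) (starterB F k) (standardTriple F) := by
      rcases (tripleSign_eq_zero_or_one_or_neg_one t).resolve_left ht with h | h
      · exact orbitDegree_eq_of_tripleSign_eq _ ht (h.trans hpos.symm)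
      · exact (orbitDegree_eq_of_tripleSign_eq _ ht (h.trans hneg.symm)).trans heq.symm
    rw [hstd ht, hstd ht₀]

end DesignCriterion

section RootsOfUnity

variable {F : Type} [Field F]

lemma embedPt_injective : Function.Injective (embedPt F) := by
  intro x y hxy
  by_contra hne
  exact (bracket_ne_zero_iff _ _).mp (by simpa [bracket, sub_eq_zero] using hne) hxy

lemma starterB_eq_image_pow {k : ℕ} (hk : k ≠ 0) {β : F} (hβ : IsPrimitiveRoot β k) :
    starterB F k = (fun i ↦ embedPt F (β ^ i)) '' Set.Iio k := by
  have : NeZero k := ⟨hk⟩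
  rw [starterB, ← Set.image_image (embedPt F) (β ^ ·)]
  congr 1
  ext x
  refine ⟨fun hx ↦ hβ.eq_pow_of_pow_eq_one hx, ?_⟩
  rintro ⟨i, -, rfl⟩
  exact (pow_right_comm β i k).trans (by rw [hβ.pow_eq_one, one_pow])

lemma injOn_embedPt_pow {k : ℕ} {β : F} (hβ : IsPrimitiveRoot β k) :
    Set.InjOn (fun i ↦ embedPt F (β ^ i)) (Set.Iio k) :=
  fun _ hi _ hj hij ↦ hβ.pow_inj hi hj (embedPt_injective hij)

variable [Fintype F] [DecidableEq F]

lemma tripleSign_embedPt (x y z : F) :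
    tripleSign (embedPt F x, embedPt F y, embedPt F z) =
      quadraticChar F (x - y) * quadraticChar F (y - z) * quadraticChar F (z - x) := by
  simp only [embedPt, tripleSign_mk, ← map_mul]
  simp [bracket]

lemma tripleSum_starterB {k : ℕ} (hk : k ≠ 0) {β : F} (hβ : IsPrimitiveRoot β k) :
    tripleSum tripleSign (starterB F k) =
      tripleSum (fun t ↦ quadraticChar F (β ^ t.1 - β ^ t.2.1) *
        quadraticChar F (β ^ t.2.1 - β ^ t.2.2) * quadraticChar F (β ^ t.2.2 - β ^ t.1))
        (Set.Iio k) := by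
  simp only [starterB_eq_image_pow hk hβ, tripleSum_image _ (injOn_embedPt_pow hβ),
    tripleSign_embedPt]

theorem gives3Design_iff_tripleSum_pow_sub_pow_eq_zero (hF : ringChar F ≠ 2) {k : ℕ} (hk : 2 < k)
    {β : F} (hβ : IsPrimitiveRoot β k) :
    gives3Design F k ↔
      tripleSum (fun t ↦ quadraticChar F (β ^ t.1 - β ^ t.2.1) *
        quadraticChar F (β ^ t.2.1 - β ^ t.2.2) * quadraticChar F (β ^ t.2.2 - β ^ t.1))
        (Set.Iio k) = 0 := by
  have hmem {i : ℕ} (hi : i < k) : embedPt F (β ^ i) ∈ starterB F k := by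
    rw [starterB_eq_image_pow (by lia) hβ]
    exact Set.mem_image_of_mem _ hi
  have hne {i j : ℕ} (hi : i < k) (hj : j < k) (hij : i ≠ j) :
      embedPt F (β ^ i) ≠ embedPt F (β ^ j) :=
    (injOn_embedPt_pow hβ).ne hi hj hij
  rw [← tripleSum_starterB (by lia) hβ]
  exact gives3Design_iff_tripleSum_eq_zero hF
    (t₀ := (embedPt F (β ^ 0), embedPt F (β ^ 1), embedPt F (β ^ 2)))
    (tripleSign_ne_zero_iff.mpr ⟨hne (by lia) (by lia) (by lia), hne (by lia) (by lia) (by lia),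
      hne (by lia) (by lia) (by lia)⟩)
    ⟨hmem (by lia), hmem (by lia), hmem (by lia)⟩

end RootsOfUnity

section QuadraticCharacter

variable {F F' : Type*} [Field F] [Fintype F] [Field F'] [Fintype F']

lemma ringChar_ne_two_of_card_mod_four_eq_one (h4 : Fintype.card F % 4 = 1) : ringChar F ≠ 2 :=
  fun h ↦ by have := FiniteField.even_card_of_char_two h; lia

variable [DecidableEq F] [DecidableEq F']

lemma quadraticChar_neg (h4 : Fintype.card F % 4 = 1) (x : F) :
    quadraticChar F (-x) = quadraticChar F x := by
  have hneg_one : quadraticChar F (-1) = 1 :=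
    (quadraticChar_one_iff_isSquare (neg_ne_zero.mpr one_ne_zero)).mpr
      (FiniteField.isSquare_neg_one_iff.mpr (by lia))
  rw [← neg_one_mul, map_mul, hneg_one, one_mul]

lemma quadraticChar_sub_comm (h4 : Fintype.card F % 4 = 1) (x y : F) :
    quadraticChar F (x - y) = quadraticChar F (y - x) := by
  rw [← neg_sub, quadraticChar_neg h4]

lemma quadraticChar_eq_one_of_pow_eq_one {k : ℕ} (hk : Odd k) {x : F} (hx : x ^ k = 1) :
    quadraticChar F x = 1 :=
  hk.pow_injective (by simp only [← map_pow, hx, map_one, one_pow])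

lemma quadraticChar_one_sub_pow_sub (h4 : Fintype.card F % 4 = 1) {k : ℕ} (hk : Odd k) {β : F}
    (hβ : β ^ k = 1) {i : ℕ} (hi : i ≤ k) :
    quadraticChar F (1 - β ^ (k - i)) = quadraticChar F (1 - β ^ i) := by
  have hfactor : 1 - β ^ i = β ^ i * (β ^ (k - i) - 1) := by
    rw [mul_sub_one, ← pow_add, Nat.add_sub_cancel' hi, hβ]
  rw [hfactor, map_mul, map_pow, quadraticChar_eq_one_of_pow_eq_one hk hβ, one_pow, one_mul,
    quadraticChar_sub_comm h4]

lemma quadraticChar_pow_sub_pow_eq_dist (h4 : Fintype.card F % 4 = 1) {k : ℕ} (hk : Odd k) {β : F}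
    (hβ : β ^ k = 1) (a b : ℕ) :
    quadraticChar F (β ^ a - β ^ b) = quadraticChar F (1 - β ^ a.dist b) := by
  wlog hab : a ≤ b generalizing a b
  · rw [quadraticChar_sub_comm h4, Nat.dist_comm, this b a (by lia)]
  have hfactor : β ^ a - β ^ b = β ^ a * (1 - β ^ (b - a)) := by
    rw [mul_one_sub, ← pow_add, Nat.add_sub_cancel' hab]
  rw [Nat.dist_eq_sub_of_le hab, hfactor, map_mul, map_pow,
    quadraticChar_eq_one_of_pow_eq_one hk hβ, one_pow, one_mul]

/-- The distance between `a` and `b` on a cycle of length `k`. The truncated subtraction makes this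
meaningful only if `a` and `b` differ by at most `k`. -/
def cyclicDist (k a b : ℕ) : ℕ :=
  min (a.dist b) (k - a.dist b)

lemma cyclicDist_le_half (k a b : ℕ) : cyclicDist k a b ≤ k / 2 := by
  grind [cyclicDist]

lemma quadraticChar_pow_sub_pow_eq_cyclicDist (h4 : Fintype.card F % 4 = 1) {k : ℕ} (hk : Odd k)
    {β : F} (hβ : β ^ k = 1) {a b : ℕ} (hab : a.dist b ≤ k) :
    quadraticChar F (β ^ a - β ^ b) = quadraticChar F (1 - β ^ cyclicDist k a b) := by
  rw [quadraticChar_pow_sub_pow_eq_dist h4 hk hβ, cyclicDist]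
  rcases min_choice (a.dist b) (k - a.dist b) with h | h <;> rw [h]
  exact (quadraticChar_one_sub_pow_sub h4 hk hβ hab).symm

lemma quadraticChar_pow_sub_pow_congr (h4 : Fintype.card F % 4 = 1) (h4' : Fintype.card F' % 4 = 1)
    {k : ℕ} (hk : Odd k) {β : F} {β' : F'} (hβ : β ^ k = 1) (hβ' : β' ^ k = 1)
    (h : ∀ i : ℕ, 1 ≤ i → i ≤ (k - 1) / 2 →
      quadraticChar F (1 - β ^ i) = quadraticChar F' (1 - β' ^ i))
    {a b : ℕ} (hab : a.dist b ≤ k) :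
    quadraticChar F (β ^ a - β ^ b) = quadraticChar F' (β' ^ a - β' ^ b) := by
  rw [quadraticChar_pow_sub_pow_eq_cyclicDist h4 hk hβ hab,
    quadraticChar_pow_sub_pow_eq_cyclicDist h4' hk hβ' hab]
  have hle := cyclicDist_le_half k a b
  rcases (cyclicDist k a b).eq_zero_or_pos with hzero | hpos
  · simp [hzero]
  · exact h _ hpos (by grind)

end QuadraticCharacter

/-- Proposition 2.7(i): for odd `k`, whether `(q,k)` gives a 3-design is
determined by the sequence `(χ(1-β), χ(1-β²), …, χ(1-β^((k-1)/2)))`, where `β`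
is a primitive `k`-th root of unity. -/
theorem stmt_5 (F F' : Type) [Field F] [Fintype F] [DecidableEq F]
    [Field F'] [Fintype F'] [DecidableEq F']
    (q q' k : ℕ) (hq : Fintype.card F = q) (hq' : Fintype.card F' = q')
    (hqodd : Odd q) (hq'odd : Odd q') (hq4 : q % 4 = 1) (hq'4 : q' % 4 = 1)
    (hkodd : Odd k) (hk3 : 3 < k)
    (hkdvd : k ∣ q - 1) (hk'dvd : k ∣ q' - 1) (hkq : k < q - 1) (hkq' : k < q' - 1)
    (he : Even ((q - 1) / k)) (he' : Even ((q' - 1) / k))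
    (β : F) (β' : F') (hβ : orderOf β = k) (hβ' : orderOf β' = k)
    (hch : ∀ i : ℕ, 1 ≤ i → i ≤ (k - 1) / 2 →
      quadraticChar F (1 - β ^ i) = quadraticChar F' (1 - β' ^ i)) :
    gives3Design F k ↔ gives3Design F' k := by
  subst hq hq'
  replace hβ : IsPrimitiveRoot β k := hβ ▸ .orderOf β
  replace hβ' : IsPrimitiveRoot β' k := hβ' ▸ .orderOf β'
  have hchar {a b : ℕ} (ha : a < k) (hb : b < k) :
      quadraticChar F (β ^ a - β ^ b) = quadraticChar F' (β' ^ a - β' ^ b) :=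
    quadraticChar_pow_sub_pow_congr hq4 hq'4 hkodd hβ.pow_eq_one hβ'.pow_eq_one hch
      (by grind [Nat.dist])
  rw [gives3Design_iff_tripleSum_pow_sub_pow_eq_zero
      (ringChar_ne_two_of_card_mod_four_eq_one hq4) (by lia) hβ,
    gives3Design_iff_tripleSum_pow_sub_pow_eq_zero
      (ringChar_ne_two_of_card_mod_four_eq_one hq'4) (by lia) hβ']
  exact Eq.congr_left <| tripleSum_congr fun a ha b hb c hc ↦ by
    rw [hchar ha hb, hchar hb hc, hchar hc ha]
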